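/- For every series-reduced finite tree T with |T| > 2 and every leaf v of T, the value p(T,v) lies in the interval [1/3,1/2]; moreover, the set of values {p(T,v) : T a series-reduced finite tree with |T| > 2, v a leaf of T} is dense in [1/3,1/2]. -/

import Mathlib

/-- A subtree of a graph: a nonempty set of vertices inducing a connected subgraph. -/
def IsSubtree {V : Type*} (G : SimpleGraph V) (S : Finset V) : Prop :=
  S.Nonempty ∧ (G.induce (S : Set V)).Connected

/-- `N(T)`: the number of subtrees. -/
noncomputable def numSubtrees {V : Type*} [Fintype V] (G : SimpleGraph V) : ℕ :=
  Nat.card {S : Finset V // IsSubtree G S}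

/-- `N(T,v)`: the number of subtrees containing the vertex `v`. -/
noncomputable def numSubtreesContaining {V : Type*} [Fintype V] (G : SimpleGraph V) (v : V) : ℕ :=
  Nat.card {S : Finset V // IsSubtree G S ∧ v ∈ S}

/-- `p(T,v) = N(T,v)/N(T)`: the probability that a uniformly random subtree contains `v`. -/
noncomputable def subtreeProb {V : Type*} [Fintype V] (G : SimpleGraph V) (v : V) : ℝ :=
  (numSubtreesContaining G v : ℝ) / (numSubtrees G : ℝ)

/-- A graph is series-reduced if no vertex has degree 2. -/
def SeriesReduced {V : Type*} (G : SimpleGraph V) : Prop :=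
  ∀ v : V, Nat.card (G.neighborSet v) ≠ 2

/-! For a vertex `u` of a forest, let `A u` count the subtrees containing `u`, and `O u` those in
the component of `u` that avoid it, so that `p(T, u) = A / (A + O)` in a tree. If removing an edge
`uc` leaves the counts `A u`, `O u`, `A c`, `O c` in the two halves, then before the removal `u` had
`A = A u * (1 + A c)` and `O = O u + A c + O c`. Induction along these recursions gives
`O + 2 ≤ 2 * A` when no vertex other than the root has degree `2`, hence `1 / 3 ≤ p`; the upper
bound `p ≤ 1 / 2` is `A = 1 + A c ≤ A c + O c = O` at a leaf with neighbour `c`, where `O c` is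
positive because `T` has a third vertex.

For the density, consider the ratio `x = O / A` at the root of a large tree. Attaching a leaf to the
root doubles `A` and adds `1` to `O`, so as `A → ∞` it halves `x`; putting a new root on top and
then a leaf beside the old tree sends `x` to `(1 + x) / 2` in the limit. The stars have `x → 0`, so
reading binary expansions the limits of `x` fill `[0, 1]`. Making a new leaf above the root yields a
series-reduced tree with `p → 1 / (2 + x)` at that leaf, and `1 / (2 + x)` runs over
`[1 / 3, 1 / 2]`. -/

open SimpleGraph Filter Topology

section SubtreeCounts

variable {V W : Type*} {G : SimpleGraph V} {H : SimpleGraph W} {S : Finset V} {u c w : V}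

lemma IsSubtree.reachable (hS : IsSubtree G S) (hu : u ∈ S) (hw : w ∈ S) : G.Reachable u w :=
  (hS.2.preconnected (⟨u, hu⟩ : (S : Set V)) ⟨w, hw⟩).map (Embedding.induce (S : Set V)).toHom

lemma IsSubtree.mono {G' : SimpleGraph V} (hle : G ≤ G') (hS : IsSubtree G S) :
    IsSubtree G' S :=
  ⟨hS.1, hS.2.mono fun _ _ h ↦ hle h⟩

lemma isSubtree_singleton (G : SimpleGraph V) (u : V) : IsSubtree G {u} :=
  ⟨Finset.singleton_nonempty u, by simpa using Connected.of_subsingleton⟩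

lemma isSubtree_map_iff (f : G ↪g H) : IsSubtree H (S.map f.toEmbedding) ↔ IsSubtree G S := by
  have hrange : Set.range (f.comp (Embedding.induce (S : Set V))) = S.map f.toEmbedding := by
    ext
    simp
  rw [IsSubtree, IsSubtree, Finset.map_nonempty, ← hrange,
    ← (f.comp (Embedding.induce (S : Set V))).isoInduceRange.connected_iff]

/-- The subtrees of `G` containing `u`, whose number is `N(T, u)` when `G` is a tree `T`. -/
def subtreesContaining (G : SimpleGraph V) (u : V) : Set (Finset V) :=
  {S | IsSubtree G S ∧ u ∈ S}

/-- The subtrees of the connected component of `u` that do not contain `u`. Restricting to the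
component of `u` lets the two halves of a tree cut at an edge be counted within one forest. -/
def subtreesAvoiding (G : SimpleGraph V) (u : V) : Set (Finset V) :=
  {S | IsSubtree G S ∧ u ∉ S ∧ ∀ w ∈ S, G.Reachable u w}

lemma singleton_mem_subtreesContaining (G : SimpleGraph V) (u : V) :
    {u} ∈ subtreesContaining G u :=
  ⟨isSubtree_singleton G u, Finset.mem_singleton_self u⟩

lemma singleton_mem_subtreesAvoiding (huw : u ≠ w) (h : G.Reachable u w) :
    {w} ∈ subtreesAvoiding G u :=
  ⟨isSubtree_singleton G w, by simpa using huw, by simpa using h⟩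

lemma ncard_subtreesContaining_pos [Finite V] (G : SimpleGraph V) (u : V) :
    0 < (subtreesContaining G u).ncard :=
  (Set.ncard_pos (Set.toFinite _)).2 ⟨{u}, singleton_mem_subtreesContaining G u⟩

lemma one_lt_ncard_subtreesContaining_of_adj [Finite V] (huc : G.Adj u c) :
    1 < (subtreesContaining G u).ncard := by
  classical
  rw [Set.one_lt_ncard]
  refine ⟨{u}, singleton_mem_subtreesContaining G u, {u, c}, ⟨⟨by simp, ?_⟩, by simp⟩, ?_⟩
  · rw [Finset.coe_pair]
    exact induce_pair_connected_of_adj huc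
  · exact fun h ↦ huc.ne' (Finset.mem_singleton.1 (h ▸ by simp))

lemma subtreeProb_eq [Fintype V] (hG : G.Connected) (u : V) :
    subtreeProb G u = (subtreesContaining G u).ncard /
      ((subtreesContaining G u).ncard + (subtreesAvoiding G u).ncard) := by
  have hunion : {S | IsSubtree G S} = subtreesContaining G u ∪ subtreesAvoiding G u := by
    ext S
    have := hG.preconnected u
    simp only [subtreesContaining, subtreesAvoiding, Set.mem_union, Set.mem_ofPred_eq]
    tauto
  have hdisj : Disjoint (subtreesContaining G u) (subtreesAvoiding G u) :=
    Set.disjoint_left.2 fun _ hS hS' ↦ hS'.2.1 hS.2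
  have htotal : numSubtrees G =
      (subtreesContaining G u).ncard + (subtreesAvoiding G u).ncard := by
    rw [← Set.ncard_union_eq hdisj, ← hunion]
    rfl
  rw [subtreeProb, htotal, Nat.cast_add]
  rfl

lemma ne_of_not_reachable (huc : ¬ G.Reachable u c) : u ≠ c :=
  fun h ↦ huc (h ▸ .refl u)

lemma eq_of_reachable_of_neighborSet_eq_empty (hu : G.neighborSet u = ∅)
    (h : G.Reachable u w) : w = u := by
  contrapose! h
  exact not_reachable_of_neighborSet_left_eq_empty h.symm hu

lemma subtreesContaining_of_isolated (hu : G.neighborSet u = ∅) :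
    subtreesContaining G u = {{u}} := by
  refine Set.eq_singleton_iff_unique_mem.2 ⟨singleton_mem_subtreesContaining G u, fun S hS ↦ ?_⟩
  exact Finset.eq_singleton_iff_unique_mem.2 ⟨hS.2, fun w hw ↦
    eq_of_reachable_of_neighborSet_eq_empty hu (hS.1.reachable hS.2 hw)⟩

lemma subtreesAvoiding_of_isolated (hu : G.neighborSet u = ∅) : subtreesAvoiding G u = ∅ := by
  refine Set.eq_empty_of_forall_notMem fun S ⟨hS, huS, hreach⟩ ↦ ?_
  obtain ⟨w, hw⟩ := hS.1
  exact huS (eq_of_reachable_of_neighborSet_eq_empty hu (hreach w hw) ▸ hw)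

end SubtreeCounts

section SupEdge

variable {V : Type*} {G : SimpleGraph V} {S : Finset V} {u c w : V}

lemma reachable_sup_edge_iff :
    (G ⊔ edge u c).Reachable u w ↔ G.Reachable u w ∨ G.Reachable c w := by
  constructor
  · intro h
    rw [reachable_iff_reflTransGen] at h
    induction h with
    | refl => exact .inl .rfl
    | tail _ hxy ih =>
      rw [sup_adj, edge_adj] at hxy
      rcases hxy with hxy | ⟨⟨rfl, rfl⟩ | ⟨rfl, rfl⟩, -⟩
      · exact ih.imp (·.trans hxy.reachable) (·.trans hxy.reachable)
      · exact .inr .rfl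
      · exact .inl .rfl
  · have huc : (G ⊔ edge u c).Reachable u c := by
      by_cases h : u = c
      · exact h ▸ .rfl
      · exact Adj.reachable (by simp [edge_adj, h])
    rintro (h | h)
    · exact h.mono le_sup_left
    · exact huc.trans (h.mono le_sup_left)

lemma induce_sup_edge {s : Set V} (hu : u ∈ s) (hc : c ∈ s) :
    (G ⊔ edge u c).induce s = G.induce s ⊔ edge ⟨u, hu⟩ ⟨c, hc⟩ := by
  ext x y
  simp [edge_adj, Subtype.ext_iff]

lemma IsSubtree.of_sup_edge (hS : IsSubtree (G ⊔ edge u c) S) (huc : ¬ (u ∈ S ∧ c ∈ S)) :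
    IsSubtree G S := by
  refine ⟨hS.1, hS.2.mono ?_⟩
  rintro ⟨x, hx⟩ ⟨y, hy⟩ hxy
  simp only [comap_adj, Function.Embedding.subtype_apply, sup_adj, edge_adj] at hxy ⊢
  simp only [Finset.mem_coe] at hx hy
  grind

open scoped Classical in
lemma IsSubtree.union_sup_edge (huc : u ≠ c) {A B : Finset V} (hA : A ∈ subtreesContaining G u)
    (hB : B ∈ subtreesContaining G c) : IsSubtree (G ⊔ edge u c) (A ∪ B) := by
  refine ⟨hA.1.1.mono Finset.subset_union_left, ?_⟩
  rw [Finset.coe_union]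
  exact connected_induce_union (hA.1.mono le_sup_left).2.preconnected
    (hB.1.mono le_sup_left).2.preconnected hA.2 hB.2 (.inr (by simp [edge_adj, huc]))

open scoped Classical in
lemma filter_reachable_mem_subtreesContaining (huc : ¬ G.Reachable u c)
    (hS : IsSubtree (G ⊔ edge u c) S) (hu : u ∈ S) (hc : c ∈ S) :
    S.filter (G.Reachable u) ∈ subtreesContaining G u := by
  have huS : u ∈ S.filter (G.Reachable u) := Finset.mem_filter.2 ⟨hu, .rfl⟩
  refine ⟨⟨⟨u, huS⟩, induce_connected_of_patches u huS fun {w} hw ↦ ?_⟩, huS⟩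
  obtain ⟨hwS, huw⟩ := Finset.mem_filter.1 hw
  have hreach := hS.2.preconnected (⟨u, hu⟩ : (S : Set V)) ⟨w, hwS⟩
  rw [induce_sup_edge (s := (S : Set V)) hu hc, reachable_sup_edge_iff] at hreach
  let incl := (Embedding.induce (G := G) (S : Set V)).toHom
  obtain ⟨p⟩ := hreach.resolve_right fun hcw ↦ huc (huw.trans (hcw.map incl).symm)
  refine ⟨{x | x ∈ (p.map incl).support}, fun x hx ↦ ?_, (p.map incl).start_mem_support,
    (p.map incl).end_mem_support, (p.map incl).connected_induce_support.preconnected _ _⟩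
  have hxS : x ∈ S := by
    obtain ⟨y, -, rfl⟩ := List.mem_map.1 (p.support_map incl ▸ hx)
    exact y.2
  exact Finset.mem_filter.2 ⟨hxS, ⟨(p.map incl).takeUntil x hx⟩⟩

open scoped Classical in
lemma subtreesContaining_sup_edge (huc : ¬ G.Reachable u c) :
    subtreesContaining (G ⊔ edge u c) u = subtreesContaining G u ∪
      (fun p : Finset V × Finset V ↦ p.1 ∪ p.2) ''
        (subtreesContaining G u ×ˢ subtreesContaining G c) := by
  ext S
  constructor
  · rintro ⟨hS, hu⟩
    by_cases hc : c ∈ S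
    · refine .inr ⟨(S.filter (G.Reachable u), S.filter (G.Reachable c)),
        ⟨filter_reachable_mem_subtreesContaining huc hS hu hc,
          filter_reachable_mem_subtreesContaining (fun h ↦ huc h.symm) (edge_comm u c ▸ hS) hc hu⟩,
        ?_⟩
      dsimp only
      rw [← Finset.filter_or, Finset.filter_true_of_mem]
      exact fun w hw ↦ reachable_sup_edge_iff.1 (hS.reachable hu hw)
    · exact .inl ⟨hS.of_sup_edge fun h ↦ hc h.2, hu⟩
  · rintro (⟨hS, hu⟩ | ⟨⟨A, B⟩, ⟨hA, hB⟩, rfl⟩)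
    · exact ⟨hS.mono le_sup_left, hu⟩
    · exact ⟨.union_sup_edge (ne_of_not_reachable huc) hA hB, Finset.mem_union_left _ hA.2⟩

open scoped Classical in
lemma injOn_union_subtreesContaining (huc : ¬ G.Reachable u c) :
    Set.InjOn (fun p : Finset V × Finset V ↦ p.1 ∪ p.2)
      (subtreesContaining G u ×ˢ subtreesContaining G c) := by
  have hfilter : ∀ A ∈ subtreesContaining G u, ∀ B ∈ subtreesContaining G c,
      (A ∪ B).filter (G.Reachable u) = A ∧ (A ∪ B).filter (G.Reachable c) = B := by
    intro A hA B hB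
    have hA' : ∀ w ∈ A, G.Reachable u w := fun w hw ↦ hA.1.reachable hA.2 hw
    have hB' : ∀ w ∈ B, G.Reachable c w := fun w hw ↦ hB.1.reachable hB.2 hw
    have hdisj : ∀ w, G.Reachable u w → ¬ G.Reachable c w := fun w h h' ↦ huc (h.trans h'.symm)
    constructor <;> ext w <;> simp only [Finset.mem_filter, Finset.mem_union] <;> grind
  rintro ⟨A, B⟩ ⟨hA, hB⟩ ⟨A', B'⟩ ⟨hA', hB'⟩ (h : A ∪ B = A' ∪ B')
  obtain ⟨hfstA, hsndB⟩ := hfilter A hA B hB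
  obtain ⟨hfstA', hsndB'⟩ := hfilter A' hA' B' hB'
  rw [← h] at hfstA' hsndB'
  exact Prod.ext (hfstA.symm.trans hfstA') (hsndB.symm.trans hsndB')

lemma ncard_subtreesContaining_sup_edge [Finite V] (huc : ¬ G.Reachable u c) :
    (subtreesContaining (G ⊔ edge u c) u).ncard =
      (subtreesContaining G u).ncard * (1 + (subtreesContaining G c).ncard) := by
  classical
  have hdisj : Disjoint (subtreesContaining G u) ((fun p : Finset V × Finset V ↦ p.1 ∪ p.2) ''
      (subtreesContaining G u ×ˢ subtreesContaining G c)) := by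
    rw [Set.disjoint_left]
    rintro _ hS ⟨⟨A, B⟩, ⟨-, hB⟩, rfl⟩
    exact huc (hS.1.reachable hS.2 (Finset.mem_union_right _ hB.2))
  rw [subtreesContaining_sup_edge huc, Set.ncard_union_eq hdisj,
    (injOn_union_subtreesContaining huc).ncard_image, Set.ncard_prod, mul_add, mul_one]

lemma subtreesAvoiding_sup_edge (huc : ¬ G.Reachable u c) :
    subtreesAvoiding (G ⊔ edge u c) u =
      subtreesAvoiding G u ∪ (subtreesContaining G c ∪ subtreesAvoiding G c) := by
  ext S
  constructor
  · rintro ⟨hS, hu, hreach⟩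
    have hS' := hS.of_sup_edge fun h ↦ hu h.1
    obtain ⟨x, hx⟩ := hS.1
    rcases reachable_sup_edge_iff.1 (hreach x hx) with h | h
    · exact .inl ⟨hS', hu, fun w hw ↦ h.trans (hS'.reachable hx hw)⟩
    · by_cases hc : c ∈ S
      · exact .inr (.inl ⟨hS', hc⟩)
      · exact .inr (.inr ⟨hS', hc, fun w hw ↦ h.trans (hS'.reachable hx hw)⟩)
  · rintro (⟨hS, hu, h⟩ | ⟨hS, hc⟩ | ⟨hS, -, h⟩)
    · exact ⟨hS.mono le_sup_left, hu, fun w hw ↦ reachable_sup_edge_iff.2 (.inl (h w hw))⟩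
    · exact ⟨hS.mono le_sup_left, fun hu ↦ huc (hS.reachable hu hc),
        fun w hw ↦ reachable_sup_edge_iff.2 (.inr (hS.reachable hc hw))⟩
    · exact ⟨hS.mono le_sup_left, fun hu ↦ huc (h u hu).symm,
        fun w hw ↦ reachable_sup_edge_iff.2 (.inr (h w hw))⟩

lemma ncard_subtreesAvoiding_sup_edge [Finite V] (huc : ¬ G.Reachable u c) :
    (subtreesAvoiding (G ⊔ edge u c) u).ncard = (subtreesAvoiding G u).ncard +
      ((subtreesContaining G c).ncard + (subtreesAvoiding G c).ncard) := by
  rw [subtreesAvoiding_sup_edge huc, Set.ncard_union_eq, Set.ncard_union_eq]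
  · exact Set.disjoint_left.2 fun S hS hS' ↦ hS'.2.1 hS.2
  · refine Set.disjoint_left.2 ?_
    rintro S ⟨hS, -, hu⟩ hS'
    obtain ⟨x, hx⟩ := hS.1
    refine huc ((hu x hx).trans (.symm ?_))
    exact hS'.elim (fun hS' ↦ hS.reachable hS'.2 hx) fun hS' ↦ hS'.2.2 x hx

lemma neighborSet_sup_edge_left (huc : u ≠ c) :
    (G ⊔ edge u c).neighborSet u = insert c (G.neighborSet u) := by
  ext w
  simp only [mem_neighborSet, sup_adj, edge_adj, Set.mem_insert_iff]
  grind

lemma neighborSet_sup_edge_of_ne (hu : w ≠ u) (hc : w ≠ c) :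
    (G ⊔ edge u c).neighborSet w = G.neighborSet w := by
  ext x
  simp only [mem_neighborSet, sup_adj, edge_adj]
  grind

lemma ncard_neighborSet_sup_edge_left [Finite V] (huc : ¬ G.Reachable u c) :
    ((G ⊔ edge u c).neighborSet u).ncard = (G.neighborSet u).ncard + 1 := by
  rw [neighborSet_sup_edge_left (ne_of_not_reachable huc),
    Set.ncard_insert_of_notMem (mt (G.mem_neighborSet u c).1 fun h ↦ huc h.reachable)]

lemma ncard_neighborSet_sup_edge_right [Finite V] (huc : ¬ G.Reachable u c) :
    ((G ⊔ edge u c).neighborSet c).ncard = (G.neighborSet c).ncard + 1 := by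
  rw [edge_comm, ncard_neighborSet_sup_edge_left fun h ↦ huc h.symm]

lemma exists_eq_sup_edge (hG : G.IsAcyclic) (huc : G.Adj u c) :
    ∃ G' : SimpleGraph V, G'.IsAcyclic ∧ ¬ G'.Reachable u c ∧ G = G' ⊔ edge u c := by
  refine ⟨G.deleteEdges {s(u, c)}, hG.anti (deleteEdges_le _),
    isAcyclic_iff_forall_adj_isBridge.1 hG huc, ?_⟩
  ext x y
  simp only [sup_adj, deleteEdges_adj, edge_adj, Set.mem_singleton_iff, Sym2.eq_iff]
  have := huc.symm
  have := huc.ne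
  grind

@[elab_as_elim]
lemma rootedForest_induction [Finite V] {motive : SimpleGraph V → V → Prop}
    (isolated : ∀ G u, G.neighborSet u = ∅ → motive G u)
    (graft : ∀ G u c, ¬ G.Reachable u c → motive G u → motive G c → motive (G ⊔ edge u c) u)
    (hG : G.IsAcyclic) (u : V) : motive G u := by
  induction G using WellFoundedLT.induction generalizing u with
  | ind G ih =>
  rcases (G.neighborSet u).eq_empty_or_nonempty with hu | ⟨c, hadj⟩
  · exact isolated G u hu
  obtain ⟨G', hG', huc, rfl⟩ := exists_eq_sup_edge hG hadj
  have hlt : G' < G' ⊔ edge u c :=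
    lt_sup_edge _ _ _ (ne_of_not_reachable huc) fun h ↦ huc h.reachable
  exact graft G' u c huc (ih G' hlt hG' u) (ih G' hlt hG' c)

end SupEdge

section Bounds

variable {V : Type*} {G : SimpleGraph V} {u c : V}

/-- The connected component of `u` has no vertex of degree `2` other than possibly `u`. This is
what remains of being series-reduced on each side of an edge that is cut, the roots being its two
endpoints. -/
def SeriesReducedFrom (G : SimpleGraph V) (u : V) : Prop :=
  ∀ w, G.Reachable u w → w ≠ u → (G.neighborSet w).ncard ≠ 2

lemma seriesReducedFrom_sup_edge_iff [Finite V] (huc : ¬ G.Reachable u c) :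
    SeriesReducedFrom (G ⊔ edge u c) u ↔
      SeriesReducedFrom G u ∧ SeriesReducedFrom G c ∧ (G.neighborSet c).ncard ≠ 1 := by
  have hdeg_c := ncard_neighborSet_sup_edge_right huc
  constructor
  · refine fun h ↦ ⟨fun w hw hwu ↦ ?_, fun w hw hwc ↦ ?_, ?_⟩
    · have hwc : w ≠ c := fun h ↦ huc (h ▸ hw)
      rw [← neighborSet_sup_edge_of_ne hwu hwc]
      exact h w (reachable_sup_edge_iff.2 (.inl hw)) hwu
    · have hwu : w ≠ u := fun h ↦ huc (h ▸ hw).symm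
      rw [← neighborSet_sup_edge_of_ne hwu hwc]
      exact h w (reachable_sup_edge_iff.2 (.inr hw)) hwu
    · have := h c (reachable_sup_edge_iff.2 (.inr .rfl)) (ne_of_not_reachable huc).symm
      omega
  · rintro ⟨hu, hc, hc_leaf⟩ w hw hwu
    rcases eq_or_ne w c with rfl | hwc
    · omega
    rw [neighborSet_sup_edge_of_ne hwu hwc]
    exact (reachable_sup_edge_iff.1 hw).elim (hu w · hwu) (hc w · hwc)

/- Once the edge from `u` to a neighbour `c` is cut, both bounds at `u` follow from the first one at
`u` and the second one at `c`; the latter is available because `c`, which did not have degree `2`,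
is not left with degree `1`. -/
lemma ncard_subtreesAvoiding_bounds [Finite V] (hG : G.IsAcyclic) (hred : SeriesReducedFrom G u) :
    (subtreesAvoiding G u).ncard + 2 ≤ 2 * (subtreesContaining G u).ncard ∧
      ((G.neighborSet u).ncard ≠ 1 →
        (subtreesAvoiding G u).ncard < (subtreesContaining G u).ncard) := by
  revert hred
  refine rootedForest_induction ?isolated ?graft hG u
  case isolated =>
    intro G u hu _
    simp [subtreesContaining_of_isolated hu, subtreesAvoiding_of_isolated hu]
  case graft =>
    intro G u c huc ihu ihc hred
    obtain ⟨hred_u, hred_c, hc⟩ := (seriesReducedFrom_sup_edge_iff huc).1 hred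
    have hu := (ihu hred_u).1
    have hc := (ihc hred_c).2 hc
    rw [ncard_subtreesContaining_sup_edge huc, ncard_subtreesAvoiding_sup_edge huc,
      ncard_neighborSet_sup_edge_left huc]
    refine ⟨by nlinarith [ncard_subtreesContaining_pos G u], fun hdeg ↦ ?_⟩
    obtain ⟨x, hux : G.Adj u x⟩ := Set.nonempty_of_ncard_ne_zero (s := G.neighborSet u) (by omega)
    nlinarith [one_lt_ncard_subtreesContaining_of_adj hux]

lemma ncard_subtreesContaining_le_ncard_subtreesAvoiding_of_leaf [Finite V] (hG : G.IsTree)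
    (hu : (G.neighborSet u).ncard = 1) (hcard : 2 < Nat.card V) :
    (subtreesContaining G u).ncard ≤ (subtreesAvoiding G u).ncard := by
  obtain ⟨c, hadj : G.Adj u c⟩ := Set.nonempty_of_ncard_ne_zero (hu ▸ one_ne_zero)
  obtain ⟨G', -, huc, rfl⟩ := exists_eq_sup_edge hG.isAcyclic hadj
  have hu_isolated : G'.neighborSet u = ∅ := by
    rw [ncard_neighborSet_sup_edge_left huc, Nat.add_eq_right] at hu
    exact (Set.ncard_eq_zero).1 hu
  obtain ⟨w, hwu, hwc⟩ := ENat.exists_ne_ne_of_three_le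
    (by rw [ENat.card_eq_coe_natCard]; exact_mod_cast hcard) u c
  have hcw : G'.Reachable c w := (reachable_sup_edge_iff.1 (hG.connected u w)).resolve_left
    fun h ↦ hwu (eq_of_reachable_of_neighborSet_eq_empty hu_isolated h)
  have hpos : 0 < (subtreesAvoiding G' c).ncard :=
    (Set.ncard_pos (Set.toFinite _)).2 ⟨{w}, singleton_mem_subtreesAvoiding hwc.symm hcw⟩
  rw [ncard_subtreesContaining_sup_edge huc, ncard_subtreesAvoiding_sup_edge huc,
    subtreesContaining_of_isolated hu_isolated, Set.ncard_singleton]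
  omega

theorem subtreeProb_mem_Icc [Fintype V] (hG : G.IsTree) (hred : SeriesReduced G)
    (hcard : 2 < Nat.card V) (hu : (G.neighborSet u).ncard = 1) :
    subtreeProb G u ∈ Set.Icc (1 / 3 : ℝ) (1 / 2) := by
  have hlower : ((subtreesAvoiding G u).ncard : ℝ) + 2 ≤ 2 * (subtreesContaining G u).ncard := by
    exact_mod_cast (ncard_subtreesAvoiding_bounds hG.isAcyclic fun w _ _ ↦ hred w).1
  have hupper : ((subtreesContaining G u).ncard : ℝ) ≤ (subtreesAvoiding G u).ncard := by
    exact_mod_cast ncard_subtreesContaining_le_ncard_subtreesAvoiding_of_leaf hG hu hcard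
  rw [subtreeProb_eq hG.connected, Set.mem_Icc, div_le_div_iff₀ (by norm_num) (by linarith),
    div_le_div_iff₀ (by linarith) (by norm_num)]
  constructor <;> linarith

end Bounds

section RootedProfile

variable {V W : Type*} {G : SimpleGraph V} {H : SimpleGraph W} {u c : V} {a b d a' b' d' : ℕ}

/-- Rooted at `u`, the connected component of `u` has no vertex of degree `2` besides possibly the
root, `a` subtrees containing the root, `b` subtrees avoiding it, and a root of degree `d`. -/
structure RootedProfile (G : SimpleGraph V) (u : V) (a b d : ℕ) : Prop where
  seriesReducedFrom : SeriesReducedFrom G u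
  ncard_containing : (subtreesContaining G u).ncard = a
  ncard_avoiding : (subtreesAvoiding G u).ncard = b
  ncard_neighborSet : (G.neighborSet u).ncard = d

lemma rootedProfile_of_isolated (hu : G.neighborSet u = ∅) : RootedProfile G u 1 0 0 where
  seriesReducedFrom _ hw hwu := absurd (eq_of_reachable_of_neighborSet_eq_empty hu hw) hwu
  ncard_containing := by rw [subtreesContaining_of_isolated hu, Set.ncard_singleton]
  ncard_avoiding := by rw [subtreesAvoiding_of_isolated hu, Set.ncard_empty]
  ncard_neighborSet := by rw [hu, Set.ncard_empty]

lemma RootedProfile.sup_edge [Finite V] (huc : ¬ G.Reachable u c) (hu : RootedProfile G u a b d)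
    (hc : RootedProfile G c a' b' d') (hd' : d' ≠ 1) :
    RootedProfile (G ⊔ edge u c) u (a * (1 + a')) (b + (a' + b')) (d + 1) where
  seriesReducedFrom := (seriesReducedFrom_sup_edge_iff huc).2
    ⟨hu.seriesReducedFrom, hc.seriesReducedFrom, hc.ncard_neighborSet ▸ hd'⟩
  ncard_containing := by
    rw [ncard_subtreesContaining_sup_edge huc, hu.ncard_containing, hc.ncard_containing]
  ncard_avoiding := by
    rw [ncard_subtreesAvoiding_sup_edge huc, hu.ncard_avoiding, hc.ncard_containing,
      hc.ncard_avoiding]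
  ncard_neighborSet := by rw [ncard_neighborSet_sup_edge_left huc, hu.ncard_neighborSet]

lemma exists_map_eq_of_reachable (f : G ↪g H)
    (hf : ∀ w, H.Reachable (f u) w → w ∈ Set.range f) {S : Finset W}
    (hS : ∀ w ∈ S, H.Reachable (f u) w) : ∃ T : Finset V, T.map f.toEmbedding = S := by
  refine ⟨S.preimage f f.injective.injOn, Finset.coe_injective ?_⟩
  rw [Finset.coe_map, Finset.coe_preimage]
  exact Set.image_preimage_eq_of_subset fun w hw ↦ hf w (hS w hw)

lemma subtreesContaining_embedding (f : G ↪g H)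
    (hf : ∀ w, H.Reachable (f u) w → w ∈ Set.range f) :
    subtreesContaining H (f u) = Finset.map f.toEmbedding '' subtreesContaining G u := by
  ext S
  constructor
  · rintro ⟨hS, hu⟩
    obtain ⟨T, rfl⟩ := exists_map_eq_of_reachable f hf fun w hw ↦ hS.reachable hu hw
    exact ⟨T, ⟨(isSubtree_map_iff f).1 hS, (Finset.mem_map' f.toEmbedding).1 hu⟩, rfl⟩
  · rintro ⟨T, ⟨hT, hu⟩, rfl⟩
    exact ⟨(isSubtree_map_iff f).2 hT, Finset.mem_map_of_mem f.toEmbedding hu⟩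

lemma subtreesAvoiding_embedding (hG : G.Connected) (f : G ↪g H)
    (hf : ∀ w, H.Reachable (f u) w → w ∈ Set.range f) :
    subtreesAvoiding H (f u) = Finset.map f.toEmbedding '' subtreesAvoiding G u := by
  ext S
  constructor
  · rintro ⟨hS, hu, hreach⟩
    obtain ⟨T, rfl⟩ := exists_map_eq_of_reachable f hf hreach
    exact ⟨T, ⟨(isSubtree_map_iff f).1 hS, fun h ↦ hu (Finset.mem_map_of_mem f.toEmbedding h),
      fun w _ ↦ hG u w⟩, rfl⟩
  · rintro ⟨T, ⟨hT, hu, -⟩, rfl⟩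
    refine ⟨(isSubtree_map_iff f).2 hT, fun h ↦ hu ((Finset.mem_map' f.toEmbedding).1 h),
      fun w hw ↦ ?_⟩
    obtain ⟨x, -, rfl⟩ := Finset.mem_map.1 hw
    exact (hG u x).map f.toHom

lemma neighborSet_embedding (hG : G.Connected) (f : G ↪g H)
    (hf : ∀ w, H.Reachable (f u) w → w ∈ Set.range f) (w : V) :
    H.neighborSet (f w) = f '' G.neighborSet w := by
  ext x
  constructor
  · intro hx
    obtain ⟨y, rfl⟩ := hf x (((hG u w).map f.toHom).trans (Adj.reachable hx))
    exact ⟨y, f.map_adj_iff.1 hx, rfl⟩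
  · rintro ⟨y, hy, rfl⟩
    exact f.map_adj_iff.2 hy

lemma RootedProfile.embedding (h : RootedProfile G u a b d) (hG : G.Connected) (f : G ↪g H)
    (hf : ∀ w, H.Reachable (f u) w → w ∈ Set.range f) : RootedProfile H (f u) a b d where
  seriesReducedFrom w hw hwu := by
    obtain ⟨x, rfl⟩ := hf w hw
    rw [neighborSet_embedding hG f hf, Set.ncard_image_of_injective _ f.injective]
    exact h.seriesReducedFrom x (hG u x) (ne_of_apply_ne f hwu)
  ncard_containing := by
    rw [subtreesContaining_embedding f hf,
      Set.ncard_image_of_injective _ (Finset.map_injective _), h.ncard_containing]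
  ncard_avoiding := by
    rw [subtreesAvoiding_embedding hG f hf,
      Set.ncard_image_of_injective _ (Finset.map_injective _), h.ncard_avoiding]
  ncard_neighborSet := by
    rw [neighborSet_embedding hG f hf, Set.ncard_image_of_injective _ f.injective,
      h.ncard_neighborSet]

lemma isTree_sum_sup_edge [Finite V] [Finite W] (hG : G.IsTree) (hH : H.IsTree) (u : V) (c : W) :
    ((G ⊕g H) ⊔ edge (Sum.inl u) (Sum.inr c)).IsTree := by
  classical
  have := Fintype.ofFinite V
  have := Fintype.ofFinite W
  obtain ⟨hGconn, hGcard⟩ := isTree_iff_connected_and_card.1 hG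
  obtain ⟨hHconn, hHcard⟩ := isTree_iff_connected_and_card.1 hH
  have hsum : Nat.card (G ⊕g H).edgeSet = Nat.card G.edgeSet + Nat.card H.edgeSet := by
    rw [Nat.card_congr edgeSetSumEquiv, Nat.card_sum]
  have hedge : Nat.card ((G ⊕g H) ⊔ edge (Sum.inl u) (Sum.inr c)).edgeSet =
      Nat.card (G ⊕g H).edgeSet + 1 := by
    simp only [Nat.card_eq_fintype_card, ← edgeFinset_card]
    exact card_edgeFinset_sup_edge _ (by simp) Sum.inl_ne_inr
  refine isTree_iff_connected_and_card.2 ⟨hGconn.sum_sup_edge hHconn, ?_⟩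
  rw [hedge, hsum, Nat.card_sum]
  omega

/-- Some tree with `n` vertices, series-reduced except possibly at its root, has the rooted profile
`(a, b, d)`. -/
def IsTreeProfile (n a b d : ℕ) : Prop :=
  ∃ (G : SimpleGraph (Fin n)) (u : Fin n), G.IsTree ∧ RootedProfile G u a b d

lemma RootedProfile.isTreeProfile [Finite V] (hG : G.IsTree) (h : RootedProfile G u a b d) :
    IsTreeProfile (Nat.card V) a b d := by
  let e := Iso.map (Finite.equivFin V) G
  exact ⟨_, _, e.isTree_iff.1 hG,
    h.embedding hG.connected e.toEmbedding fun w _ ↦ e.surjective w⟩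

variable {n n' : ℕ}

lemma isTreeProfile_singleton : IsTreeProfile 1 1 0 0 :=
  ⟨⊥, 0, .of_subsingleton, rootedProfile_of_isolated (by simp)⟩

lemma IsTreeProfile.degree_lt (h : IsTreeProfile n a b d) : d < n := by
  obtain ⟨G, u, -, hprof⟩ := h
  simpa [hprof.ncard_neighborSet] using Set.ncard_lt_card (G.neighborSet_ne_univ u)

lemma IsTreeProfile.graft (h : IsTreeProfile n a b d) (h' : IsTreeProfile n' a' b' d')
    (hd' : d' ≠ 1) : IsTreeProfile (n + n') (a * (1 + a')) (b + (a' + b')) (d + 1) := by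
  obtain ⟨G, u, hG, hu⟩ := h
  obtain ⟨H, c, hH, hc⟩ := h'
  have huc := not_reachable_sum_inl_inr (G := G) (H := H)
  have hu' : RootedProfile (G ⊕g H) (.inl u) a b d :=
    hu.embedding hG.connected Embedding.sumInl fun w hw ↦ by
      rcases w with w | w
      · exact ⟨w, rfl⟩
      · exact absurd hw (huc u w)
  have hc' : RootedProfile (G ⊕g H) (.inr c) a' b' d' :=
    hc.embedding hH.connected Embedding.sumInr fun w hw ↦ by
      rcases w with w | w
      · exact absurd hw.symm (huc w c)
      · exact ⟨w, rfl⟩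
  simpa using (hu'.sup_edge (huc u c) hc' hd').isTreeProfile (isTree_sum_sup_edge hG hH u c)

lemma IsTreeProfile.addLeaf (h : IsTreeProfile n a b d) :
    IsTreeProfile (n + 1) (2 * a) (b + 1) (d + 1) := by
  simpa [mul_comm] using h.graft isTreeProfile_singleton zero_ne_one

lemma IsTreeProfile.addRoot (h : IsTreeProfile n a b d) (hd : d ≠ 1) :
    IsTreeProfile (n + 1) (1 + a) (a + b) 1 := by
  simpa [add_comm] using isTreeProfile_singleton.graft h hd

lemma isTreeProfile_star (k : ℕ) : IsTreeProfile (k + 1) (2 ^ k) k k := by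
  induction k with
  | zero => exact isTreeProfile_singleton
  | succ k ih => simpa [pow_succ'] using ih.addLeaf

end RootedProfile

section Density

variable {n a b d : ℕ} {x : ℝ}

/-- The set of all values `p(T, v)` at leaves `v` of series-reduced trees `T` with more than two
vertices. -/
def leafProbs : Set ℝ :=
  {x | ∃ (n : ℕ) (G : SimpleGraph (Fin n)) (v : Fin n),
    G.IsTree ∧ SeriesReduced G ∧ 2 < n ∧ Nat.card (G.neighborSet v) = 1 ∧ x = subtreeProb G v}

lemma IsTreeProfile.div_mem_leafProbs (h : IsTreeProfile n a b 1) (hn : 2 < n) :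
    (a / (a + b) : ℝ) ∈ leafProbs := by
  obtain ⟨G, u, hG, hu⟩ := h
  refine ⟨n, G, u, hG, fun w ↦ ?_, hn, hu.ncard_neighborSet, ?_⟩
  · rcases eq_or_ne w u with rfl | hwu
    · exact hu.ncard_neighborSet.trans_ne (by norm_num)
    · exact hu.seriesReducedFrom w (hG.connected u w) hwu
  · rw [subtreeProb_eq hG.connected, hu.ncard_containing, hu.ncard_avoiding]

lemma IsTreeProfile.containing_pos (h : IsTreeProfile n a b d) : 0 < a := by
  obtain ⟨G, u, -, hu⟩ := h
  exact hu.ncard_containing ▸ ncard_subtreesContaining_pos G u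

/-- The pairs `(b / a, 1 / a)`, where `a` and `b` count the subtrees containing and avoiding the
root of a tree that is series-reduced except possibly at its root. The second coordinate tends to
`0` as `a` tends to infinity; a root of degree at least `2` does not get degree `2` when it is
joined to a new vertex. -/
def profilePoints : Set (ℝ × ℝ) :=
  {p | ∃ n a b d, IsTreeProfile n a b d ∧ 2 ≤ d ∧ p = ((b / a : ℝ), (1 / a : ℝ))}

lemma mapsTo_profilePoints_addLeaf :
    Set.MapsTo (fun p : ℝ × ℝ ↦ ((p.1 + p.2) / 2, p.2 / 2)) profilePoints profilePoints := by
  rintro _ ⟨n, a, b, d, h, hd, rfl⟩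
  refine ⟨_, _, _, _, h.addLeaf, by omega, Prod.ext ?_ ?_⟩ <;>
  · push_cast
    field_simp

lemma mapsTo_profilePoints_addRoot_addLeaf :
    Set.MapsTo (fun p : ℝ × ℝ ↦ ((1 + p.1 + p.2) / (2 * (1 + p.2)), p.2 / (2 * (1 + p.2))))
      profilePoints profilePoints := by
  rintro _ ⟨n, a, b, d, h, hd, rfl⟩
  have ha := h.containing_pos
  refine ⟨_, _, _, _, (h.addRoot (by omega)).addLeaf, le_rfl, Prod.ext ?_ ?_⟩ <;>
  · push_cast
    field_simp
    ring

lemma mapsTo_profilePoints_leafProbs :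
    Set.MapsTo (fun p : ℝ × ℝ ↦ (1 + p.2) / (2 + p.1 + p.2)) profilePoints leafProbs := by
  rintro _ ⟨n, a, b, d, h, hd, rfl⟩
  have ha := h.containing_pos
  have hn := h.degree_lt
  convert (h.addRoot (by omega)).div_mem_leafProbs (by omega) using 1
  push_cast
  field_simp
  ring

/-- The limits of the ratio `b / a` in `profilePoints` as `a` tends to infinity. -/
def limitRatios : Set ℝ := {x | (x, (0 : ℝ)) ∈ closure profilePoints}

lemma isClosed_limitRatios : IsClosed limitRatios :=
  isClosed_closure.preimage (by fun_prop : Continuous fun x : ℝ ↦ (x, (0 : ℝ)))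

lemma zero_mem_limitRatios : 0 ∈ limitRatios := by
  have hratio : Tendsto (fun k : ℕ ↦ (k / 2 ^ k : ℝ)) atTop (𝓝 0) := by
    simpa using tendsto_pow_const_div_const_pow_of_one_lt 1 (one_lt_two : (1 : ℝ) < 2)
  have hinv : Tendsto (fun k : ℕ ↦ (1 / 2 ^ k : ℝ)) atTop (𝓝 0) := by
    simpa using tendsto_pow_const_div_const_pow_of_one_lt 0 (one_lt_two : (1 : ℝ) < 2)
  refine mem_closure_of_tendsto (hratio.prodMk_nhds hinv) ?_
  filter_upwards [eventually_ge_atTop 2] with k hk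
  exact ⟨k + 1, 2 ^ k, k, k, isTreeProfile_star k, hk, by push_cast; rfl⟩

lemma half_mem_limitRatios (hx : x ∈ limitRatios) : x / 2 ∈ limitRatios := by
  have hcont : Continuous fun p : ℝ × ℝ ↦ ((p.1 + p.2) / 2, p.2 / 2) := by fun_prop
  simpa [limitRatios] using map_mem_closure hcont hx mapsTo_profilePoints_addLeaf

lemma one_add_half_mem_limitRatios (hx : x ∈ limitRatios) : (1 + x) / 2 ∈ limitRatios := by
  have hcont : ContinuousAt (fun p : ℝ × ℝ ↦
      ((1 + p.1 + p.2) / (2 * (1 + p.2)), p.2 / (2 * (1 + p.2)))) (x, 0) := by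
    fun_prop (disch := simp)
  simpa [limitRatios] using
    hcont.continuousWithinAt.mem_closure hx mapsTo_profilePoints_addRoot_addLeaf

lemma inv_two_add_mem_closure_leafProbs (hx : x ∈ limitRatios) (hx0 : 0 ≤ x) :
    1 / (2 + x) ∈ closure leafProbs := by
  have hcont : ContinuousAt (fun p : ℝ × ℝ ↦ (1 + p.2) / (2 + p.1 + p.2)) (x, 0) := by
    have hne : 2 + x + 0 ≠ 0 := by positivity
    fun_prop (disch := exact hne)
  simpa using hcont.continuousWithinAt.mem_closure hx mapsTo_profilePoints_leafProbs

lemma Icc_zero_one_subset_of_isClosed {C : Set ℝ} (hC : IsClosed C) (hzero : 0 ∈ C)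
    (hhalf : ∀ x ∈ C, x / 2 ∈ C) (hone_add_half : ∀ x ∈ C, (1 + x) / 2 ∈ C) :
    Set.Icc 0 1 ⊆ C := by
  have happrox : ∀ k : ℕ, ∀ x ∈ Set.Icc (0 : ℝ) 1, ∃ y ∈ C, |x - y| ≤ (1 / 2) ^ k := by
    intro k
    induction k with
    | zero => exact fun x hx ↦ ⟨0, hzero, by simpa [abs_of_nonneg hx.1] using hx.2⟩
    | succ k ih =>
      rintro x ⟨hx0, hx1⟩
      rcases le_total x (1 / 2) with hx | hx
      · obtain ⟨y, hy, hxy⟩ := ih (2 * x) ⟨by linarith, by linarith⟩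
        refine ⟨y / 2, hhalf y hy, ?_⟩
        rw [abs_le] at hxy ⊢
        constructor <;> linarith [pow_succ (1 / 2 : ℝ) k]
      · obtain ⟨y, hy, hxy⟩ := ih (2 * x - 1) ⟨by linarith, by linarith⟩
        refine ⟨(1 + y) / 2, hone_add_half y hy, ?_⟩
        rw [abs_le] at hxy ⊢
        constructor <;> linarith [pow_succ (1 / 2 : ℝ) k]
  intro x hx
  refine hC.closure_subset (Metric.mem_closure_iff.2 fun ε hε ↦ ?_)
  obtain ⟨k, hk⟩ := exists_pow_lt_of_lt_one hε (one_half_lt_one : (1 / 2 : ℝ) < 1)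
  obtain ⟨y, hy, hxy⟩ := happrox k x hx
  exact ⟨y, hy, hxy.trans_lt hk⟩

theorem Icc_subset_closure_leafProbs : Set.Icc (1 / 3 : ℝ) (1 / 2) ⊆ closure leafProbs := by
  rintro t ⟨hlower, hupper⟩
  have ht : 0 < t := by linarith
  have hx : 1 / t - 2 ∈ Set.Icc (0 : ℝ) 1 := by
    rw [Set.mem_Icc, sub_nonneg, sub_le_iff_le_add, le_div_iff₀ ht, div_le_iff₀ ht]
    constructor <;> linarith
  have hmem := Icc_zero_one_subset_of_isClosed isClosed_limitRatios zero_mem_limitRatios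
    (fun _ ↦ half_mem_limitRatios) (fun _ ↦ one_add_half_mem_limitRatios) hx
  simpa using inv_two_add_mem_closure_leafProbs hmem hx.1

end Density

theorem stmt13 :
    (∀ (n : ℕ) (G : SimpleGraph (Fin n)) (v : Fin n), G.IsTree → SeriesReduced G →
      2 < n → Nat.card (G.neighborSet v) = 1 →
      subtreeProb G v ∈ Set.Icc (1 / 3 : ℝ) (1 / 2)) ∧
    closure {x : ℝ | ∃ (n : ℕ) (G : SimpleGraph (Fin n)) (v : Fin n),
      G.IsTree ∧ SeriesReduced G ∧ 2 < n ∧ Nat.card (G.neighborSet v) = 1 ∧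
      x = subtreeProb G v} = Set.Icc (1 / 3 : ℝ) (1 / 2) := by
  have hbounds (n : ℕ) (G : SimpleGraph (Fin n)) (v : Fin n) (hG : G.IsTree)
      (hred : SeriesReduced G) (hn : 2 < n) (hv : Nat.card (G.neighborSet v) = 1) :
      subtreeProb G v ∈ Set.Icc (1 / 3 : ℝ) (1 / 2) :=
    subtreeProb_mem_Icc hG hred (by rwa [Nat.card_fin]) hv
  refine ⟨hbounds, (closure_minimal ?_ isClosed_Icc).antisymm Icc_subset_closure_leafProbs⟩
  rintro _ ⟨n, G, v, hG, hred, hn, hv, rfl⟩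
  exact hbounds n G v hG hred hn hv
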